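/- arXiv:2003.05537 — 2 statements merged into one kernel-verified Lean document; each statement's English description precedes it below -/
import Mathlib

section
/- Let I be an n-semiprimary ideal of a commutative ring R. Then I is an m-semiprimary ideal of R for every integer m ≥ n. -/
/-- A proper ideal `I` of a commutative ring `R` is an `n`-semiprimary ideal of `R` if
whenever `x^n * y^n ∈ I` for `x, y ∈ R`, then `x^n ∈ I` or `y^n ∈ I`. -/
def IsNSemiprimary {R : Type*} [CommRing R] (I : Ideal R) (n : ℕ) : Prop :=
  I ≠ ⊤ ∧ ∀ x y : R, x ^ n * y ^ n ∈ I → x ^ n ∈ I ∨ y ^ n ∈ I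

/-!
For `n > 0`, an ideal is `n`-semiprimary exactly when its radical is prime and the `n`-th power
of every element of the radical lies in the ideal. The exponent enters only through the second
condition, which passes to larger exponents.
-/

namespace IsNSemiprimary

variable {R : Type*} [CommRing R] {I : Ideal R} {n : ℕ}

theorem pow_mem_of_pow_pow_mem (hI : IsNSemiprimary I n) {x : R} {k : ℕ}
    (hx : (x ^ k) ^ n ∈ I) : x ^ n ∈ I := by
  induction k with
  | zero =>
    have one_mem : (1 : R) ∈ I := by simpa only [pow_zero, one_pow] using hx
    exact absurd ((Ideal.eq_top_iff_one I).2 one_mem) hI.1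
  | succ k ih =>
    have mul_mem : (x ^ k) ^ n * x ^ n ∈ I := by rwa [← mul_pow, ← pow_succ]
    exact (hI.2 _ _ mul_mem).elim ih id

theorem mem_radical_iff_pow_mem (hI : IsNSemiprimary I n) (hn : 0 < n) {x : R} :
    x ∈ I.radical ↔ x ^ n ∈ I :=
  ⟨fun ⟨_, hk⟩ => hI.pow_mem_of_pow_pow_mem (I.pow_mem_of_mem hk n hn), fun hx => ⟨n, hx⟩⟩

theorem isPrime_radical (hI : IsNSemiprimary I n) (hn : 0 < n) : I.radical.IsPrime where
  ne_top' := mt Ideal.radical_eq_top.1 hI.1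
  mem_or_mem' {x y} hxy := by
    simp only [hI.mem_radical_iff_pow_mem hn, mul_pow] at hxy ⊢
    exact hI.2 x y hxy

end IsNSemiprimary

theorem isNSemiprimary_of_isPrime_radical {R : Type*} [CommRing R] {I : Ideal R} {n : ℕ}
    (hprime : I.radical.IsPrime) (hpow : ∀ x ∈ I.radical, x ^ n ∈ I) : IsNSemiprimary I n := by
  refine ⟨mt Ideal.radical_eq_top.2 hprime.ne_top, fun x y hxy => ?_⟩
  have mul_mem_radical : x * y ∈ I.radical := ⟨n, by rwa [mul_pow]⟩
  exact (hprime.mem_or_mem mul_mem_radical).imp (hpow x) (hpow y)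

/-- Let `I` be an `n`-semiprimary ideal of a commutative ring `R`. Then `I` is an
`m`-semiprimary ideal of `R` for every integer `m ≥ n`. -/
theorem isNSemiprimary_of_le {R : Type*} [CommRing R]
    (n : ℕ) (hn : 0 < n) (I : Ideal R) (hI : IsNSemiprimary I n)
    (m : ℕ) (hm : n ≤ m) :
    IsNSemiprimary I m := by
  refine isNSemiprimary_of_isPrime_radical (hI.isPrime_radical hn) fun x hx => ?_
  have pow_mem : x ^ n ∈ I := (hI.mem_radical_iff_pow_mem hn).1 hx
  exact I.pow_mem_of_pow_mem pow_mem hm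
end

section
/- Let R be a Noetherian integral domain. Then R is a Dedekind domain if and only if every ideal I of R which is 2-semiprimary but not prime satisfies I = M^2 for some maximal ideal M of R. -/
/-!
In a Dedekind domain, a nonzero `n`-semiprimary ideal has prime radical `P`, hence equals `P ^ i`
for some `i ≠ 0`. It contains the `n`-th powers of all elements of `P`, and the `n`-th power of an
element of `P \ P ^ 2` is not in `P ^ (n + 1)`, so `i ≤ n`; for `n = 2` this leaves `P` and `P ^ 2`.

Conversely, every ideal `I` with `P ^ 2 ≤ I ≤ P`, where `P` is prime, is `2`-semiprimary, and it is
prime only if `I = P`. The hypothesis therefore leaves no ideal strictly between `P ^ 2` and `P`,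
which makes the maximal ideal of the localization at `P` principal by Nakayama's lemma.
-/

section Semiprimary

variable {R : Type*} [CommRing R] {I P : Ideal R} {n : ℕ}

theorem IsNSemiprimary.pow_mem_of_mem_radical (h : IsNSemiprimary I n) (hn : n ≠ 0) {x : R}
    (hx : x ∈ I.radical) : x ^ n ∈ I := by
  have descent (k : ℕ) (hk : (x ^ k) ^ n ∈ I) : x ^ n ∈ I := by
    induction k with
    | zero => exact absurd ((Ideal.eq_top_iff_one I).mpr (by simpa using hk)) h.1
    | succ k ih => exact (h.2 (x ^ k) x (by rwa [← mul_pow, ← pow_succ])).elim ih id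
  obtain ⟨k, hk⟩ := hx
  exact descent k (Ideal.pow_mem_of_mem I hk n (Nat.pos_of_ne_zero hn))

theorem IsNSemiprimary.isPrime_radical_s9 (h : IsNSemiprimary I n) (hn : n ≠ 0) :
    I.radical.IsPrime := by
  refine ⟨mt Ideal.radical_eq_top.mp h.1, fun {x y} hxy => ?_⟩
  have hpow : x ^ n * y ^ n ∈ I := mul_pow x y n ▸ h.pow_mem_of_mem_radical hn hxy
  exact (h.2 x y hpow).imp (fun hx => ⟨n, hx⟩) (fun hy => ⟨n, hy⟩)

theorem isNSemiprimary_of_pow_le_of_le (hP : P.IsPrime) (hle : P ^ n ≤ I) (hIP : I ≤ P) :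
    IsNSemiprimary I n := by
  refine ⟨ne_top_of_le_ne_top hP.ne_top hIP, fun x y hxy => ?_⟩
  have pow_mem {z : R} (hz : z ^ n ∈ P) : z ^ n ∈ I :=
    hle (Ideal.pow_mem_pow (hP.mem_of_pow_mem n hz) n)
  exact (hP.mem_or_mem (hIP hxy)).imp pow_mem pow_mem

end Semiprimary

section DedekindDomain

theorem sq_dvd_of_pow_succ_dvd_pow {M : Type*} [CommMonoidWithZero M] [IsCancelMulZero M]
    {p a : M} {n : ℕ} (hp : Prime p) (h : p ^ (n + 1) ∣ a ^ n) : p ^ 2 ∣ a := by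
  obtain ⟨b, rfl⟩ : p ∣ a := hp.dvd_of_dvd_pow ((dvd_pow_self p n.succ_ne_zero).trans h)
  rw [mul_pow, pow_succ, mul_dvd_mul_iff_left (pow_ne_zero n hp.ne_zero)] at h
  exact sq p ▸ mul_dvd_mul_left p (hp.dvd_of_dvd_pow h)

variable {R : Type*} [CommRing R] [IsDedekindDomain R] {I P : Ideal R} {n : ℕ}

theorem pow_notMem_pow_succ_of_notMem_sq (hP : P.IsPrime) (hP0 : P ≠ ⊥) {x : R}
    (hx : x ∉ P ^ 2) : x ^ n ∉ P ^ (n + 1) := by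
  rw [← Ideal.dvd_span_singleton] at hx ⊢
  rw [← Ideal.span_singleton_pow]
  exact mt (sq_dvd_of_pow_succ_dvd_pow (Ideal.prime_of_isPrime hP0 hP)) hx

theorem exists_eq_radical_pow_of_isPrime_radical (hI : I ≠ ⊥) (hrad : I.radical.IsPrime) :
    ∃ i, I = I.radical ^ i := by
  have hrad0 : I.radical ≠ ⊥ := ne_bot_of_le_ne_bot hI Ideal.le_radical
  obtain ⟨k, hk⟩ := I.exists_radical_pow_le_of_fg I.radical.fg_of_isNoetherianRing
  obtain ⟨i, -, hi⟩ :=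
    (dvd_prime_pow (Ideal.prime_of_isPrime hrad0 hrad) k).mp (Ideal.dvd_iff_le.mpr hk)
  exact ⟨i, associated_iff_eq.mp hi⟩

theorem IsNSemiprimary.exists_eq_radical_pow (h : IsNSemiprimary I n) (hn : n ≠ 0) (hI : I ≠ ⊥) :
    ∃ i ≠ 0, i ≤ n ∧ I = I.radical ^ i := by
  have hrad := h.isPrime_radical_s9 hn
  have hrad0 : I.radical ≠ ⊥ := ne_bot_of_le_ne_bot hI Ideal.le_radical
  obtain ⟨i, hi⟩ := exists_eq_radical_pow_of_isPrime_radical hI hrad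
  refine ⟨i, ?_, ?_, hi⟩
  · rintro rfl
    exact h.1 (by rw [hi, pow_zero, Ideal.one_eq_top])
  · by_contra! hni
    obtain ⟨x, hx, hx2⟩ := Ideal.exists_mem_pow_notMem_pow_succ I.radical hrad0 hrad.ne_top 1
    have hxI : x ^ n ∈ I := h.pow_mem_of_mem_radical hn (pow_one I.radical ▸ hx)
    exact pow_notMem_pow_succ_of_notMem_sq hrad hrad0 hx2 (Ideal.pow_le_pow_right hni (hi ▸ hxI))

theorem IsNSemiprimary.eq_radical_sq (h : IsNSemiprimary I 2) (hI : I ≠ ⊥) (hnp : ¬ I.IsPrime) :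
    I = I.radical ^ 2 := by
  obtain ⟨i, hi0, hi2, hi⟩ := h.exists_eq_radical_pow two_ne_zero hI
  have hi1 : i ≠ 1 := by
    rintro rfl
    rw [pow_one] at hi
    exact hnp (hi ▸ h.isPrime_radical_s9 two_ne_zero)
  obtain rfl : i = 2 := by lia
  exact hi

end DedekindDomain

section SquareCovered

theorem exists_span_singleton_sup_eq_of_covBy {R M : Type*} [Semiring R] [AddCommMonoid M]
    [Module R M] {N₁ N₂ : Submodule R M} (h : N₁ ⋖ N₂) :
    ∃ x, Submodule.span R {x} ⊔ N₁ = N₂ := by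
  obtain ⟨x, hx₂, hx₁⟩ := SetLike.exists_of_lt h.lt
  have hle : Submodule.span R {x} ⊔ N₁ ≤ N₂ :=
    sup_le ((Submodule.span_singleton_le_iff_mem x N₂).mpr hx₂) h.le
  refine ⟨x, (h.eq_or_eq le_sup_right hle).resolve_left fun heq => hx₁ ?_⟩
  exact heq ▸ Submodule.mem_sup_left (Submodule.mem_span_singleton_self x)

variable {R : Type*} [CommRing R]

theorem isPrincipal_maximalIdeal_localization_of_sq_covBy [IsNoetherianRing R] {P : Ideal R}
    [P.IsPrime] (h : P ^ 2 ⋖ P) :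
    (IsLocalRing.maximalIdeal (Localization.AtPrime P)).IsPrincipal := by
  obtain ⟨x, hx⟩ := exists_span_singleton_sup_eq_of_covBy h
  set f := algebraMap R (Localization.AtPrime P)
  set m := IsLocalRing.maximalIdeal (Localization.AtPrime P)
  have hm : P.map f = m := Localization.AtPrime.map_eq_maximalIdeal
  have hsup : Ideal.span {f x} ⊔ m ^ 2 = m := by
    simpa only [Ideal.map_sup, Ideal.map_pow, Ideal.map_span, Set.image_singleton, hm] using
      congrArg (Ideal.map f) hx
  refine ⟨f x, le_antisymm ?_ (le_sup_left.trans hsup.le)⟩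
  have : IsNoetherianRing (Localization.AtPrime P) :=
    IsLocalization.isNoetherianRing P.primeCompl _ inferInstance
  apply Submodule.le_of_le_smul_of_le_jacobson_bot m.fg_of_isNoetherianRing
    (IsLocalRing.maximalIdeal_le_jacobson ⊥)
  rw [smul_eq_mul, ← sq]
  exact hsup.ge

variable [IsDomain R]

theorem isDiscreteValuationRing_localization_of_sq_covBy [IsNoetherianRing R] {P : Ideal R}
    [P.IsPrime] (h : P ^ 2 ⋖ P) : IsDiscreteValuationRing (Localization.AtPrime P) := by
  have hnf : ¬ IsField (Localization.AtPrime P) :=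
    IsLocalization.AtPrime.not_isField R h.lt.ne_bot _
  have : IsNoetherianRing (Localization.AtPrime P) :=
    IsLocalization.isNoetherianRing P.primeCompl _ inferInstance
  exact ((IsDiscreteValuationRing.TFAE _ hnf).out 0 4).mpr
    (isPrincipal_maximalIdeal_localization_of_sq_covBy h)

theorem eq_of_le_of_dimensionLEOne_localization {P M : Ideal R} [P.IsPrime] [M.IsPrime]
    [Ring.DimensionLEOne (Localization.AtPrime M)] (hP0 : P ≠ ⊥) (hPM : P ≤ M) : P = M := by
  set f := algebraMap R (Localization.AtPrime M)
  have hf : Function.Injective f := IsLocalization.injective _ M.primeCompl_le_nonZeroDivisors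
  have hmap0 : P.map f ≠ ⊥ := mt (Ideal.map_eq_bot_iff_of_injective hf).mp hP0
  have hprime : (P.map f).IsPrime := Ideal.isPrime_map_of_isLocalizationAtPrime M hPM
  have hmax : P.map f = IsLocalRing.maximalIdeal _ :=
    IsLocalRing.eq_maximalIdeal (hprime.isMaximal hmap0)
  rw [← Ideal.under_map_of_isLocalizationAtPrime M (S := Localization.AtPrime M) hPM, hmax,
    Localization.AtPrime.under_maximalIdeal]

theorem sq_lt_self_of_fg {I : Ideal R} (hfg : I.FG) (h0 : I ≠ ⊥) (h1 : I ≠ ⊤) : I ^ 2 < I := by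
  refine (Ideal.pow_le_self two_ne_zero).lt_of_ne fun hsq => ?_
  have hidem : IsIdempotentElem I := (sq I).symm.trans hsq
  exact ((Ideal.isIdempotentElem_iff_eq_bot_or_top I hfg).mp hidem).elim h0 h1

theorem isDedekindDomain_of_sq_wcovBy [IsNoetherianRing R]
    (h : ∀ M : Ideal R, M.IsMaximal → M ^ 2 ⩿ M) : IsDedekindDomain R := by
  have : IsDedekindDomainDvr R :=
    { is_dvr_at_nonzero_prime P hP0 hP := by
        obtain ⟨M, hM, hPM⟩ := P.exists_le_maximal hP.ne_top
        have hlt : M ^ 2 < M :=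
          sq_lt_self_of_fg M.fg_of_isNoetherianRing (ne_bot_of_le_ne_bot hP0 hPM) hM.ne_top
        have hdvr := isDiscreteValuationRing_localization_of_sq_covBy ((h M hM).covBy_of_lt hlt)
        obtain rfl : P = M := eq_of_le_of_dimensionLEOne_localization hP0 hPM
        exact hdvr }
  infer_instance

end SquareCovered

theorem sq_wcovBy_of_forall_isNSemiprimary_two {R : Type*} [CommRing R]
    (H : ∀ I : Ideal R, IsNSemiprimary I 2 → ¬ I.IsPrime → ∃ M : Ideal R, M.IsMaximal ∧ I = M ^ 2)
    {P : Ideal R} (hP : P.IsPrime) : P ^ 2 ⩿ P := by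
  refine ⟨Ideal.pow_le_self two_ne_zero, fun I hlt hIP => ?_⟩
  have hnp : ¬ I.IsPrime := fun hI => hIP.not_ge (hI.le_of_pow_le hlt.le)
  obtain ⟨M, hM, rfl⟩ := H I (isNSemiprimary_of_pow_le_of_le hP hlt.le hIP.le) hnp
  obtain rfl : M = P := hM.eq_of_le hP.ne_top (hP.le_of_pow_le hIP.le)
  exact hlt.false

/-- Let `R` be a Noetherian integral domain. Then `R` is a Dedekind domain if and only if
every ideal `I` of `R` which is `2`-semiprimary but not prime (i.e., `δ_R(I) = 2`)
satisfies `I = M^2` for some maximal ideal `M` of `R`. -/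
theorem isDedekindDomain_iff_two_semiprimary {R : Type*} [CommRing R] [IsDomain R]
    [IsNoetherianRing R] :
    IsDedekindDomain R ↔
      ∀ I : Ideal R, IsNSemiprimary I 2 → ¬ I.IsPrime →
        ∃ M : Ideal R, M.IsMaximal ∧ I = M ^ 2 := by
  constructor
  · intro _ I h hnp
    have hI0 : I ≠ ⊥ := by
      rintro rfl
      exact hnp Ideal.isPrime_bot
    have hrad0 : I.radical ≠ ⊥ := ne_bot_of_le_ne_bot hI0 Ideal.le_radical
    exact ⟨I.radical, (h.isPrime_radical_s9 two_ne_zero).isMaximal hrad0, h.eq_radical_sq hI0 hnp⟩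
  · intro H
    exact isDedekindDomain_of_sq_wcovBy fun M hM =>
      sq_wcovBy_of_forall_isNSemiprimary_two H hM.isPrime
end
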